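/- arXiv:2401.16884 — 3 statements merged into one kernel-verified Lean document; each statement's English description precedes it below -/
import Mathlib

section
/- For every n ≥ 1 and every complex matrix M indexed by (Fin n → Fin 2), the uniform n-qubit Pauli-string twirl equals the trace part of M: (1/4^n) • ∑ over all v : Fin n → Fin 4 of (P v) * M * (P v) = ((Matrix.trace M)/2^n) • 1. -/
open Matrix Complex

/-- The single-qubit Pauli matrices. -/
noncomputable def pauli : Fin 4 → Matrix (Fin 2) (Fin 2) ℂ
  | 0 => !![1,0;0,1]
  | 1 => !![0,1;1,0]
  | 2 => !![0,-Complex.I;Complex.I,0]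
  | 3 => !![1,0;0,-1]

/-- The `n`-qubit Pauli string indexed by `v : Fin n → Fin 4`. -/
noncomputable def pauliString {n : ℕ} (v : Fin n → Fin 4) :
    Matrix (Fin n → Fin 2) (Fin n → Fin 2) ℂ :=
  Matrix.of fun i j => ∏ k, pauli (v k) (i k) (j k)

/-!
A twirl `∑ₐ Aₐ M Bₐ` is the contraction of `M` with the tensor `∑ₐ Aₐ ⊗ Bₐ`. When that tensor is
`c` times the swap of the two factors, the contraction closes `M` up into `c · tr M`. The Pauli
matrices satisfy this swap relation with `c = 2`, and swap relations multiply under tensor products,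
so the Pauli strings satisfy it with `c = 2 ^ n`.
-/

/-- The completeness relation `∑ₐ Aₐ ⊗ Bₐ = c • SWAP` between two finite families of matrices, which
makes the twirl `M ↦ ∑ₐ Aₐ M Bₐ` a multiple of the trace. It is written in matrix entries; the
second family has transposed shape so that `Aₐ M Bₐ` makes sense for rectangular `Aₐ`. -/
def SwapRelation {ι m n R : Type*} [Fintype ι] [DecidableEq m] [DecidableEq n]
    [NonUnitalNonAssocSemiring R] (c : R) (A : ι → Matrix m n R) (B : ι → Matrix n m R) : Prop :=
  ∀ i j k l, ∑ a, A a i j * B a k l = if i = l ∧ j = k then c else 0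

/-- The tensor product of a finite family of matrices, i.e. the iterated Kronecker product, with
rows and columns indexed by dependent functions rather than by nested pairs. -/
def piKronecker {κ R : Type*} {m n : κ → Type*} [Fintype κ] [CommMonoid R]
    (A : ∀ t, Matrix (m t) (n t) R) : Matrix (∀ t, m t) (∀ t, n t) R :=
  Matrix.of fun i j => ∏ t, A t (i t) (j t)

theorem SwapRelation.sum_mul_mul_eq_smul_one {ι m n R : Type*} [Fintype ι] [DecidableEq m]
    [Fintype n] [DecidableEq n] [CommSemiring R]
    {c : R} {A : ι → Matrix m n R} {B : ι → Matrix n m R}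
    (h : SwapRelation c A B) (M : Matrix n n R) :
    ∑ a, A a * M * B a = (c * trace M) • (1 : Matrix m m R) := by
  ext i l
  calc (∑ a, A a * M * B a) i l
      = ∑ a, ∑ k, ∑ j, M j k * (A a i j * B a k l) := by
        simp only [Matrix.sum_apply, Matrix.mul_apply, Finset.sum_mul]
        refine Fintype.sum_congr _ _ fun a => Fintype.sum_congr _ _ fun k =>
          Fintype.sum_congr _ _ fun j => ?_
        rw [mul_right_comm, mul_comm]
    _ = ∑ k, ∑ j, M j k * ∑ a, A a i j * B a k l := by
        simp only [Finset.mul_sum]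
        rw [Finset.sum_comm]
        exact Finset.sum_congr rfl fun k _ => Finset.sum_comm
    _ = ∑ k, ∑ j, M j k * if i = l ∧ j = k then c else 0 := by simp only [h i _ _ l]
    _ = ((c * trace M) • (1 : Matrix m m R)) i l := by
        by_cases hil : i = l <;> simp [hil, Matrix.trace, Finset.mul_sum, mul_comm]

theorem SwapRelation.piKronecker {κ R : Type*} {ι m n : κ → Type*} [Fintype κ]
    [DecidableEq κ] [∀ t, Fintype (ι t)] [∀ t, DecidableEq (m t)] [∀ t, DecidableEq (n t)]
    [CommSemiring R] {c : κ → R}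
    {A : ∀ t, ι t → Matrix (m t) (n t) R} {B : ∀ t, ι t → Matrix (n t) (m t) R}
    (h : ∀ t, SwapRelation (c t) (A t) (B t)) :
    SwapRelation (∏ t, c t) (fun v : ∀ t, ι t => piKronecker fun t => A t (v t))
      (fun v => piKronecker fun t => B t (v t)) := by
  intro i j k l
  calc ∑ v : ∀ t, ι t, (∏ t, A t (v t) (i t) (j t)) * ∏ t, B t (v t) (k t) (l t)
      = ∏ t, ∑ a, A t a (i t) (j t) * B t a (k t) (l t) := by
        simp only [← Finset.prod_mul_distrib, Finset.prod_univ_sum, Fintype.piFinset_univ]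
    _ = ∏ t, if i t = l t ∧ j t = k t then c t else 0 :=
        Finset.prod_congr rfl fun t _ => h t _ _ _ _
    _ = if i = l ∧ j = k then ∏ t, c t else 0 := by
        simp only [Finset.prod_ite_zero, Finset.mem_univ, forall_const, forall_and, funext_iff]

theorem swapRelation_pauli : SwapRelation 2 pauli pauli := by
  intro i j k l
  fin_cases i <;> fin_cases j <;> fin_cases k <;> fin_cases l <;>
    simp [Fin.sum_univ_four, pauli, one_add_one_eq_two]

theorem pauliString_eq_piKronecker {n : ℕ} (v : Fin n → Fin 4) :
    pauliString v = piKronecker fun t => pauli (v t) :=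
  rfl

theorem swapRelation_pauliString (n : ℕ) :
    SwapRelation (2 ^ n) (pauliString (n := n)) pauliString := by
  simpa only [← pauliString_eq_piKronecker, Fin.prod_const] using
    SwapRelation.piKronecker fun _ : Fin n => swapRelation_pauli

/-- The uniform `n`-qubit Pauli-string twirl of any matrix equals its trace part. -/
theorem pauli_string_twirl (n : ℕ) (hn : 1 ≤ n)
    (M : Matrix (Fin n → Fin 2) (Fin n → Fin 2) ℂ) :
    (1/4^n : ℂ) • ∑ v : Fin n → Fin 4, pauliString v * M * pauliString v
      = ((Matrix.trace M)/2^n) • (1 : Matrix (Fin n → Fin 2) (Fin n → Fin 2) ℂ) := by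
  have four_pow : (4 : ℂ) ^ n = 2 ^ n * 2 ^ n := by rw [← mul_pow]; norm_num
  have normalization : (1 / 4 ^ n : ℂ) * (2 ^ n * trace M) = trace M / 2 ^ n := by
    rw [four_pow]
    field_simp
  rw [(swapRelation_pauliString n).sum_mul_mul_eq_smul_one M, smul_smul, normalization]
end

section
/- Signed single-qubit Pauli twirl: fix a non-identity Pauli matrix σ' ∈ {X, Y, Z}. For every complex 2×2 matrix M, (1/4)·∑ over v ∈ {0,1,2,3} of s(σ_v, σ') • (σ_v * M * σ_v) = ((Matrix.trace (σ' * M))/2) • σ', where s(P,Q) = 1 if P*Q = Q*P and s(P,Q) = -1 otherwise. -/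
open Matrix Complex

/-- The sign `s(P,Q)`: `1` if `P` and `Q` commute, `-1` otherwise. -/
noncomputable def sgn (P Q : Matrix (Fin 2) (Fin 2) ℂ) : ℂ :=
  if P * Q = Q * P then 1 else -1

/-!
Conjugation by a Pauli matrix is diagonal in the Pauli basis: `σ_v σ_w σ_v = s(σ_v, σ_w) σ_w`.
Expand `M` in that basis. Since the maps `v ↦ s(σ_v, σ_w)` are the four characters of the Klein
four-group, averaging against one of them keeps only the corresponding term of the expansion.
-/

section Sign

variable {P Q : Matrix (Fin 2) (Fin 2) ℂ}

theorem sgn_eq_one (h : P * Q = Q * P) : sgn P Q = 1 :=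
  if_pos h

theorem sgn_eq_neg_one (h : P * Q = -(Q * P)) (hne : Q * P ≠ 0) : sgn P Q = -1 := by
  have : IsAddTorsionFree (Matrix (Fin 2) (Fin 2) ℂ) := .of_isTorsionFree ℂ _
  exact if_neg fun hcomm => hne (self_eq_neg.mp (hcomm.symm.trans h))

theorem mul_eq_sgn_smul_mul (h : P * Q = Q * P ∨ P * Q = -(Q * P)) :
    P * Q = sgn P Q • (Q * P) := by
  by_cases hcomm : P * Q = Q * P
  · rw [sgn_eq_one hcomm, one_smul, hcomm]
  · rw [sgn, if_neg hcomm, neg_one_smul, h.resolve_left hcomm]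

end Sign

theorem pauli_zero : pauli 0 = 1 :=
  Matrix.one_fin_two.symm

theorem pauli_mul_self (v : Fin 4) : pauli v * pauli v = 1 := by
  fin_cases v <;> simp [pauli, Matrix.one_fin_two]

theorem isUnit_pauli (v : Fin 4) : IsUnit (pauli v) :=
  .of_mul_eq_one _ (pauli_mul_self v)

theorem pauli_mul_comm {u v : Fin 4} (h : u = 0 ∨ v = 0 ∨ u = v) :
    pauli u * pauli v = pauli v * pauli u := by
  rcases h with rfl | rfl | rfl
  · rw [pauli_zero, one_mul, mul_one]
  · rw [pauli_zero, one_mul, mul_one]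
  · rfl

theorem pauli_mul_anticomm {u v : Fin 4} (h : ¬(u = 0 ∨ v = 0 ∨ u = v)) :
    pauli u * pauli v = -(pauli v * pauli u) := by
  fin_cases u <;> fin_cases v <;> first | exact absurd (by decide) h | simp [pauli]

theorem pauli_mul_comm_or_anticomm (u v : Fin 4) :
    pauli u * pauli v = pauli v * pauli u ∨ pauli u * pauli v = -(pauli v * pauli u) :=
  (em _).imp pauli_mul_comm pauli_mul_anticomm

theorem sgn_pauli (u v : Fin 4) :
    sgn (pauli u) (pauli v) = if u = 0 ∨ v = 0 ∨ u = v then 1 else -1 := by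
  split_ifs with h
  · exact sgn_eq_one (pauli_mul_comm h)
  · exact sgn_eq_neg_one (pauli_mul_anticomm h) ((isUnit_pauli v).mul (isUnit_pauli u)).ne_zero

theorem sum_sgn_pauli_mul_sgn_pauli (u w : Fin 4) :
    ∑ v, sgn (pauli v) (pauli u) * sgn (pauli v) (pauli w) = if u = w then 4 else 0 := by
  simp only [sgn_pauli]
  have orthogonality : ∀ u w : Fin 4,
      ∑ v : Fin 4, (if v = 0 ∨ u = 0 ∨ v = u then 1 else -1) *
        (if v = 0 ∨ w = 0 ∨ v = w then 1 else -1) = if u = w then (4 : ℤ) else 0 := by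
    decide
  exact_mod_cast orthogonality u w

theorem pauli_mul_pauli_mul_pauli (v w : Fin 4) :
    pauli v * pauli w * pauli v = sgn (pauli v) (pauli w) • pauli w := by
  rw [mul_eq_sgn_smul_mul (pauli_mul_comm_or_anticomm v w), smul_mul_assoc, mul_assoc,
    pauli_mul_self, mul_one]

theorem trace_mul_fin_two {R : Type*} [NonUnitalNonAssocSemiring R]
    (A B : Matrix (Fin 2) (Fin 2) R) :
    trace (A * B) = A 0 0 * B 0 0 + A 0 1 * B 1 0 + (A 1 0 * B 0 1 + A 1 1 * B 1 1) := by
  simp only [trace_fin_two, Matrix.mul_apply, Fin.sum_univ_two]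

theorem sum_trace_smul_pauli (M : Matrix (Fin 2) (Fin 2) ℂ) :
    ∑ w, (trace (pauli w * M) / 2) • pauli w = M := by
  have trace_zero : trace (pauli 0 * M) = M 0 0 + M 1 1 := by
    rw [trace_mul_fin_two]
    simp [pauli]
  have trace_one : trace (pauli 1 * M) = M 1 0 + M 0 1 := by
    rw [trace_mul_fin_two]
    simp [pauli]
  have trace_two : trace (pauli 2 * M) = I * (-M 1 0 + M 0 1) := by
    rw [trace_mul_fin_two]
    simp [pauli, mul_add]
  have trace_three : trace (pauli 3 * M) = M 0 0 - M 1 1 := by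
    rw [trace_mul_fin_two]
    simp [pauli, sub_eq_add_neg]
  rw [Fin.sum_univ_four, trace_zero, trace_one, trace_two, trace_three]
  ext i j
  fin_cases i <;> fin_cases j <;>
    simp only [pauli, Fin.zero_eta, Fin.mk_one, Matrix.add_apply, Matrix.smul_apply, of_apply,
      cons_val', cons_val_zero, cons_val_one, cons_val_fin_one, smul_eq_mul] <;>
    grind [I_mul_I]

theorem pauli_mul_mul_pauli (v : Fin 4) (M : Matrix (Fin 2) (Fin 2) ℂ) :
    pauli v * M * pauli v =
      ∑ w, (sgn (pauli v) (pauli w) * (trace (pauli w * M) / 2)) • pauli w := by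
  conv_lhs => rw [← sum_trace_smul_pauli M]
  simp only [Finset.mul_sum, Finset.sum_mul, mul_smul_comm, smul_mul_assoc,
    pauli_mul_pauli_mul_pauli, smul_smul, mul_comm (sgn _ _)]

theorem sum_sgn_smul_pauli_mul_mul_pauli (u : Fin 4) (M : Matrix (Fin 2) (Fin 2) ℂ) :
    ∑ v, sgn (pauli v) (pauli u) • (pauli v * M * pauli v) =
      (4 * (trace (pauli u * M) / 2)) • pauli u := calc
  _ = ∑ v, ∑ w, (sgn (pauli v) (pauli u) * sgn (pauli v) (pauli w) *
        (trace (pauli w * M) / 2)) • pauli w := by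
    simp only [pauli_mul_mul_pauli, Finset.smul_sum, smul_smul, ← mul_assoc]
  _ = ∑ w, ((∑ v, sgn (pauli v) (pauli u) * sgn (pauli v) (pauli w)) *
        (trace (pauli w * M) / 2)) • pauli w := by
    rw [Finset.sum_comm]
    simp only [Finset.sum_mul, Finset.sum_smul]
  _ = (4 * (trace (pauli u * M) / 2)) • pauli u := by
    simp only [sum_sgn_pauli_mul_sgn_pauli, ite_mul, zero_mul, ite_smul, zero_smul,
      Finset.sum_ite_eq, Finset.mem_univ, if_true]

theorem signed_pauli_twirl_general (u : Fin 4) (M : Matrix (Fin 2) (Fin 2) ℂ) :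
    (1/4 : ℂ) • ∑ v : Fin 4, sgn (pauli v) (pauli u) • (pauli v * M * pauli v)
      = ((trace (pauli u * M))/2) • pauli u := by
  rw [sum_sgn_smul_pauli_mul_mul_pauli, smul_smul]
  congr 1
  ring

/-- Signed single-qubit Pauli twirl against a fixed non-identity Pauli `σ'`. -/
theorem signed_pauli_twirl (σ' : Matrix (Fin 2) (Fin 2) ℂ)
    (hσ' : σ' = pauli 1 ∨ σ' = pauli 2 ∨ σ' = pauli 3)
    (M : Matrix (Fin 2) (Fin 2) ℂ) :
    (1/4 : ℂ) • ∑ v : Fin 4, sgn (pauli v) σ' • (pauli v * M * pauli v)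
      = ((Matrix.trace (σ' * M))/2) • σ' := by
  rcases hσ' with rfl | rfl | rfl <;> exact signed_pauli_twirl_general _ M
end

section
/- Robust phase estimation signal for the noisy Z rotation: let ω be a real number, k a natural number, and set Z_{π/2}(ω) = (Real.cos ((π/4)*(1+ω)) : ℂ) • 1 - (Complex.I * Real.sin ((π/4)*(1+ω))) • Z. Then Complex.normSq ((plusᴴ * (Z_{π/2}(ω))^k * plus) 0 0) = (1/2) * (1 + Real.cos (k*(π/2)*(1+ω))), where plus : Matrix (Fin 2) (Fin 1) ℂ is the column vector (1/√2, 1/√2). -/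
/-!
Since `Z` is an involution, `cos t - i sin t Z = exp (-i t Z)` is a one-parameter group in `t`,
so its `k`-th power is the rotation by `k t`. As `⟨+|+⟩ = 1` and `⟨+|Z|+⟩ = 0`, the amplitude of
this power in the state `|+⟩` is `cos (k t)`, and the half-angle formula gives its square.
-/

open Matrix Complex Real

/-- Pauli `Z` matrix. -/
noncomputable def Z : Matrix (Fin 2) (Fin 2) ℂ := !![1,0;0,-1]

/-- The `|+⟩` state as a column vector. -/
noncomputable def plus : Matrix (Fin 2) (Fin 1) ℂ :=
  Matrix.of fun _ _ => (1/Real.sqrt 2 : ℂ)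

section InvolutionRotation

variable {A : Type*} [Ring A] [Algebra ℂ A]

/-- The rotation `exp (-i t a)` generated by an element `a` with `a * a = 1`, in Euler form,
which makes its powers explicit. For a Pauli matrix `a`, `t` is half the Bloch sphere angle. -/
noncomputable def involutionRotation (a : A) (t : ℂ) : A :=
  Complex.cos t • (1 : A) - (I * Complex.sin t) • a

theorem involutionRotation_zero (a : A) : involutionRotation a 0 = 1 := by
  simp [involutionRotation]

theorem involutionRotation_add {a : A} (ha : a * a = 1) (s t : ℂ) :
    involutionRotation a (s + t) = involutionRotation a s * involutionRotation a t := by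
  have sin_coeff : I * Complex.sin s * (I * Complex.sin t) =
      -(Complex.sin s * Complex.sin t) := by
    rw [mul_mul_mul_comm, I_mul_I, neg_one_mul]
  simp only [involutionRotation, Complex.cos_add, Complex.sin_add, sub_mul, mul_sub,
    smul_mul_smul_comm, one_mul, mul_one, ha, sin_coeff]
  module

theorem involutionRotation_pow {a : A} (ha : a * a = 1) (t : ℂ) (k : ℕ) :
    involutionRotation a t ^ k = involutionRotation a (k * t) := by
  induction k with
  | zero => simp [involutionRotation_zero]
  | succ k ih => rw [pow_succ, ih, ← involutionRotation_add ha, Nat.cast_succ, add_one_mul]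

end InvolutionRotation

theorem Z_mul_self : Z * Z = 1 := by
  simp [Z, Matrix.one_fin_two]

theorem plus_expectation_eq_sum_div_two (M : Matrix (Fin 2) (Fin 2) ℂ) :
    (plusᴴ * M * plus) 0 0 = (∑ i, ∑ j, M i j) / 2 := by
  have sqrt_two_sq : (√2 : ℂ) ^ 2 = 2 := by
    exact_mod_cast Real.sq_sqrt zero_le_two
  simp only [plus, Matrix.mul_apply, Fin.sum_univ_two, conjTranspose_apply, of_apply, one_div,
    star_inv₀, RCLike.star_def, conj_ofReal]
  field_simp
  rw [sqrt_two_sq]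
  ring

theorem plus_expectation_involutionRotation_Z (t : ℂ) :
    (plusᴴ * involutionRotation Z t * plus) 0 0 = Complex.cos t := by
  rw [plus_expectation_eq_sum_div_two]
  simp [involutionRotation, Z, Fin.sum_univ_two]

theorem normSq_plus_expectation_involutionRotation_Z_pow (t : ℝ) (k : ℕ) :
    normSq ((plusᴴ * involutionRotation Z t ^ k * plus) 0 0) =
      (1 / 2) * (1 + Real.cos (2 * (k * t))) := by
  have amplitude : (plusᴴ * involutionRotation Z t ^ k * plus) 0 0 = (Real.cos (k * t) : ℂ) := by
    simp [involutionRotation_pow Z_mul_self, plus_expectation_involutionRotation_Z]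
  rw [amplitude, normSq_ofReal, ← sq, Real.cos_sq]
  ring

/-- Robust phase estimation signal for the noisy `Z` rotation. -/
theorem rpe_signal_Z (ω : ℝ) (k : ℕ) :
    Complex.normSq
        ((plusᴴ *
            ((Real.cos ((π/4)*(1+ω)) : ℂ) • (1 : Matrix (Fin 2) (Fin 2) ℂ) -
             (Complex.I * Real.sin ((π/4)*(1+ω))) • Z) ^ k *
          plus) 0 0)
      = (1/2) * (1 + Real.cos (k*(π/2)*(1+ω))) := by
  have angle : (k : ℝ) * (π / 2) * (1 + ω) = 2 * (k * ((π / 4) * (1 + ω))) := by ring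
  rw [angle, ofReal_cos, ofReal_sin, ← involutionRotation]
  exact normSq_plus_expectation_involutionRotation_Z_pow _ k
end
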